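/- Let H be a finite connected simple graph with at least two vertices. Then the minimum, over all source-to-sink directed paths P = σ₁, …, σ_t in the state digraph D(H), of the total weight Σ_{i=1}^t r_{σ_i}, equals γ_path(H), the minimum cost of an efficient dominating broadcast of H whose domination graph is a path. -/

import Mathlib

/-!
The two infima agree because they are taken over the same set of weights.

Given a path of states, the key fact is `BD.Arc.L_eq`: along an arc `σ → τ` the left side grows by
exactly the ball of `σ`, i.e. `τ.L = σ.L ∪ X_σ`. Starting from a source, `(σ i).L` is therefore the
union of the earlier balls, so the balls are pairwise disjoint, and the sink condition makes them
cover the graph. Since no edge joins the two sides of a state, nonconsecutive balls are not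
adjacent, whereas the distance condition of an arc provides an edge between consecutive ones. The
broadcast with value `r` at each centre thus has a path as its domination graph.

Conversely, the balls of an efficient dominating broadcast partition the vertices. If the domination
graph is a path, the balls before and those after a given one form two connected sets with no edge
between them, hence are components of its complement (`BD.isCompOf_of_closed`), and the
corresponding states form a source-to-sink path. The distance condition holds since disjoint balls
are joined by an edge exactly when the distance of their centres is `p + q + 1`
(`BD.ball_adj_iff`).
-/

open scoped Classical

namespace BD

variable {V : Type*}

/-- The ball of radius `p` around `v`: all vertices at graph distance at most `p`. -/
def ball (G : SimpleGraph V) (v : V) (p : ℕ) : Set V := {x | G.dist v x ≤ p}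

/-- Open neighborhood of a vertex set: vertices outside `S` adjacent to some vertex of `S`. -/
def nbhd (G : SimpleGraph V) (S : Set V) : Set V :=
  {x | x ∉ S ∧ ∃ y ∈ S, G.Adj y x}

/-- A broadcast is dominating if every vertex lies in the ball of some active vertex. -/
def Dominating (G : SimpleGraph V) (f : V → ℕ) : Prop :=
  ∀ u, ∃ v, 0 < f v ∧ u ∈ ball G v (f v)

/-- A broadcast is efficient if the balls of distinct active vertices are pairwise disjoint. -/
def Efficient (G : SimpleGraph V) (f : V → ℕ) : Prop :=
  ∀ u v, 0 < f u → 0 < f v → u ≠ v → Disjoint (ball G u (f u)) (ball G v (f v))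

/-- The cost of a broadcast: the sum of its values. -/
def cost [Fintype V] (f : V → ℕ) : ℕ := ∑ v, f v

/-- Adjacency in the domination graph of a broadcast: distinct active vertices whose
balls are joined by an edge of `G`. -/
def DomAdj (G : SimpleGraph V) (f : V → ℕ) (u v : V) : Prop :=
  0 < f u ∧ 0 < f v ∧ u ≠ v ∧ ∃ x ∈ ball G u (f u), ∃ y ∈ ball G v (f v), G.Adj x y

/-- The domination graph of the broadcast `f` is a path: the active vertices can be
enumerated as `a 0, …, a (t-1)` so that domination-graph adjacency is exactly
consecutiveness in this enumeration. -/
def PathShaped (G : SimpleGraph V) (f : V → ℕ) : Prop :=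
  ∃ (t : ℕ) (a : ℕ → V), 1 ≤ t ∧
    (∀ i j, i < t → j < t → a i = a j → i = j) ∧
    (∀ v, 0 < f v ↔ ∃ i, i < t ∧ a i = v) ∧
    (∀ i j, i < t → j < t → (DomAdj G f (a i) (a j) ↔ (i + 1 = j ∨ j + 1 = i)))

/-- `γ_path`: minimum cost of an efficient dominating broadcast whose domination
graph is a path. -/
noncomputable def gammaPath (G : SimpleGraph V) [Fintype V] : ℕ :=
  sInf {c | ∃ f, Dominating G f ∧ Efficient G f ∧ PathShaped G f ∧ cost f = c}

/-- `γ_b`: minimum cost of a dominating broadcast. -/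
noncomputable def gammaB (G : SimpleGraph V) [Fintype V] : ℕ :=
  sInf {c | ∃ f, Dominating G f ∧ cost f = c}

/-- Eccentricity of a vertex. -/
noncomputable def ecc [Fintype V] (G : SimpleGraph V) (v : V) : ℕ :=
  Finset.univ.sup (fun x => G.dist v x)

/-- Radius of a graph. -/
noncomputable def radius [Fintype V] [Nonempty V] (G : SimpleGraph V) : ℕ :=
  Finset.univ.inf' Finset.univ_nonempty (ecc G)

/-- `C` is a connected component (as a vertex set) of the subgraph of `G` induced on `S`:
a maximal nonempty connected subset of `S`. -/
def IsCompOf (G : SimpleGraph V) (S C : Set V) : Prop :=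
  C.Nonempty ∧ C ⊆ S ∧ (G.induce C).Connected ∧
    ∀ D : Set V, C ⊆ D → D ⊆ S → (G.induce D).Connected → D = C

/-- A state of the state digraph `D(H)`: an oriented ball `(c, r)` together with its
left and right residual sides `L`, `R`, which partition the complement of the ball and
each of which is empty or a connected component of the residual graph. -/
structure GState (G : SimpleGraph V) where
  c : V
  r : ℕ
  L : Set V
  R : Set V
  r_pos : 1 ≤ r
  disj : L ∩ R = ∅
  union : L ∪ R = (ball G c r)ᶜ
  hL : L = ∅ ∨ IsCompOf G ((ball G c r)ᶜ) L
  hR : R = ∅ ∨ IsCompOf G ((ball G c r)ᶜ) R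

/-- The ball of a state. -/
def Xball {G : SimpleGraph V} (σ : GState G) : Set V := ball G σ.c σ.r

/-- The arc relation of the state digraph `D(H)`: conditions (A1)–(A4). -/
def Arc {G : SimpleGraph V} (σ τ : GState G) : Prop :=
  σ.R.Nonempty ∧ τ.L.Nonempty ∧
  G.dist σ.c τ.c = σ.r + τ.r + 1 ∧
  τ.c ∈ σ.R ∧ σ.c ∈ τ.L ∧
  nbhd G (Xball σ) ∩ σ.R ⊆ Xball τ ∧
  nbhd G (Xball τ) ∩ τ.L ⊆ Xball σ

end BD

namespace BD

variable {V : Type*}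

/-! ### Connected sets, components and balls -/

section Connectivity

variable {G : SimpleGraph V}

/-- A connected vertex set that meets both `A` and its complement contains an edge leaving `A`. -/
lemma exists_cross {D : Set V} (hD : (G.induce D).Connected) (A : Set V) {x y : V}
    (hx : x ∈ D) (hy : y ∈ D) (hxA : x ∈ A) (hyA : y ∉ A) :
    ∃ u ∈ D, ∃ v ∈ D, u ∈ A ∧ v ∉ A ∧ G.Adj u v := by
  obtain ⟨p⟩ := hD.preconnected ⟨x, hx⟩ ⟨y, hy⟩
  obtain ⟨d, -, h1, h2⟩ := p.exists_boundary_dart (Subtype.val ⁻¹' A) hxA hyA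
  exact ⟨d.fst, d.fst.2, d.snd, d.snd.2, h1, h2, d.adj⟩

lemma exists_cross_univ (hG : G.Connected) (A : Set V) {x y : V} (hxA : x ∈ A) (hyA : y ∉ A) :
    ∃ u v, u ∈ A ∧ v ∉ A ∧ G.Adj u v := by
  obtain ⟨p⟩ := hG.preconnected x y
  obtain ⟨d, -, h1, h2⟩ := p.exists_boundary_dart A hxA hyA
  exact ⟨d.fst, d.snd, h1, h2, d.adj⟩

/-- A component of `G[S]` swallows every connected subset of `S` that it meets. -/
lemma IsCompOf.absorb {S C D : Set V} (hC : IsCompOf G S C) (hD : (G.induce D).Connected)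
    (hDS : D ⊆ S) (hm : (C ∩ D).Nonempty) : D ⊆ C := by
  have h := hC.2.2.2 (C ∪ D) Set.subset_union_left (Set.union_subset hC.2.1 hDS)
    (SimpleGraph.induce_union_connected hC.2.2.1.preconnected hD.preconnected hm)
  rw [← h]
  exact Set.subset_union_right

lemma IsCompOf.mem_of_adj {S C : Set V} (hC : IsCompOf G S C) {x y : V} (hx : x ∈ C)
    (hy : y ∈ S) (hxy : G.Adj x y) : y ∈ C := by
  refine hC.absorb (SimpleGraph.induce_pair_connected_of_adj hxy) ?_ ⟨x, hx, by simp⟩ (by simp)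
  rintro z (rfl | rfl)
  exacts [hC.2.1 hx, hy]

/-- A nonempty connected subset of `S` with no edge to the rest of `S` is a component. -/
lemma isCompOf_of_closed {S C : Set V} (hC : (G.induce C).Connected) (hCS : C ⊆ S)
    (hcl : ∀ x ∈ C, ∀ y ∈ S, G.Adj x y → y ∈ C) : IsCompOf G S C := by
  obtain ⟨⟨z, hz⟩⟩ := hC.nonempty
  refine ⟨⟨z, hz⟩, hCS, hC, fun D hCD hDS hD => (hCD.antisymm fun y hy => ?_).symm⟩
  by_contra hyC
  obtain ⟨u, -, v, hv, huC, hvC, huv⟩ := exists_cross hD C (hCD hz) hy hz hyC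
  exact hvC (hcl u huC v (hDS hv) huv)

lemma mem_ball_self (v : V) (p : ℕ) : v ∈ ball G v p := by
  simp [ball]

lemma ball_connected (hG : G.Connected) (v : V) (p : ℕ) : (G.induce (ball G v p)).Connected := by
  refine SimpleGraph.induce_connected_of_patches v (mem_ball_self v p) fun {w} hw => ?_
  obtain ⟨q, hq⟩ := hG.exists_walk_length_eq_dist v w
  refine ⟨{x | x ∈ q.support}, fun x hx => ?_, by simp, by simp,
    q.connected_induce_support.preconnected _ _⟩
  have hx' : x ∈ q.support := hx
  have h1 := SimpleGraph.dist_le (q.takeUntil x hx')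
  have h2 := q.length_takeUntil_le_length hx'
  have h3 : G.dist v w ≤ p := hw
  change G.dist v x ≤ p
  omega

/-- Every distance up to `dist u v` is realised along a geodesic from `u` to `v`. -/
lemma exists_between (hG : G.Connected) (u v : V) {n : ℕ} (hn : n ≤ G.dist u v) :
    ∃ w, G.dist u w ≤ n ∧ G.dist w v + n ≤ G.dist u v := by
  obtain ⟨q, hq⟩ := hG.exists_walk_length_eq_dist u v
  refine ⟨q.getVert n, ?_, ?_⟩
  · have := SimpleGraph.dist_le (q.take n)
    rw [q.take_length] at this
    omega
  · have := SimpleGraph.dist_le (q.drop n)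
    rw [q.drop_length] at this
    omega

lemma ball_disjoint_iff (hG : G.Connected) (u v : V) (p q : ℕ) :
    Disjoint (ball G u p) (ball G v q) ↔ p + q < G.dist u v := by
  rw [Set.disjoint_left]
  constructor
  · intro h
    by_contra! hle
    obtain ⟨w, h1, h2⟩ := exists_between hG u v (min_le_right p (G.dist u v))
    refine h (a := w) (show G.dist u w ≤ p by omega) (show G.dist v w ≤ q from ?_)
    rw [SimpleGraph.dist_comm]
    omega
  · intro h x hx hy
    have h1 : G.dist u x ≤ p := hx
    have h2 : G.dist v x ≤ q := hy
    have h3 := hG.dist_triangle (u := u) (v := x) (w := v)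
    rw [SimpleGraph.dist_comm] at h2
    omega

/-- Disjoint balls are joined by an edge exactly when their centres are as close as
disjointness permits. -/
lemma ball_adj_iff (hG : G.Connected) {u v : V} {p q : ℕ}
    (hd : Disjoint (ball G u p) (ball G v q)) :
    (∃ x ∈ ball G u p, ∃ y ∈ ball G v q, G.Adj x y) ↔ G.dist u v = p + q + 1 := by
  have hlt := (ball_disjoint_iff hG u v p q).1 hd
  constructor
  · rintro ⟨x, hx, y, hy, hxy⟩
    have h1 : G.dist u x ≤ p := hx
    have h2 : G.dist v y ≤ q := hy
    have h3 := hG.dist_triangle (u := u) (v := x) (w := v)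
    have h4 := hG.dist_triangle (u := x) (v := y) (w := v)
    have h5 : G.dist x y = 1 := SimpleGraph.dist_eq_one_iff_adj.2 hxy
    rw [SimpleGraph.dist_comm] at h2
    omega
  · intro h
    obtain ⟨x, h1, h2⟩ := exists_between hG u v (n := p) (by omega)
    obtain ⟨y, h3, h4⟩ := exists_between hG x v (n := 1) (by
      have := hG.dist_triangle (u := u) (v := x) (w := v)
      omega)
    have h5 := hG.dist_triangle (u := u) (v := x) (w := v)
    have h6 := hG.dist_triangle (u := x) (v := y) (w := v)
    refine ⟨x, h1, y, show G.dist v y ≤ q from ?_, SimpleGraph.dist_eq_one_iff_adj.1 (by omega)⟩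
    rw [SimpleGraph.dist_comm]
    omega

end Connectivity

/-! ### From state paths to broadcasts -/

section StatePaths

variable {G : SimpleGraph V}

lemma GState.mem_cases (σ : GState G) (x : V) : x ∈ σ.L ∨ x ∈ σ.R ∨ x ∈ Xball σ := by
  by_cases h : x ∈ Xball σ
  · exact .inr (.inr h)
  · have : x ∈ σ.L ∪ σ.R := by rw [σ.union]; exact h
    exact this.elim .inl (fun h => .inr (.inl h))

lemma GState.notMem_of_L (σ : GState G) {x : V} (h : x ∈ σ.L) : x ∉ Xball σ ∧ x ∉ σ.R := by
  refine ⟨?_, fun h' => ?_⟩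
  · have : x ∈ σ.L ∪ σ.R := .inl h
    rwa [σ.union] at this
  · have : x ∈ σ.L ∩ σ.R := ⟨h, h'⟩
    rw [σ.disj] at this
    exact this

lemma GState.notMem_of_R (σ : GState G) {x : V} (h : x ∈ σ.R) : x ∉ Xball σ ∧ x ∉ σ.L := by
  refine ⟨?_, fun h' => (σ.notMem_of_L h').2 h⟩
  have : x ∈ σ.L ∪ σ.R := .inr h
  rwa [σ.union] at this

lemma GState.compL (σ : GState G) {x : V} (h : x ∈ σ.L) : IsCompOf G (Xball σ)ᶜ σ.L :=
  σ.hL.resolve_left (Set.nonempty_iff_ne_empty.1 ⟨x, h⟩)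

lemma GState.compR (σ : GState G) {x : V} (h : x ∈ σ.R) : IsCompOf G (Xball σ)ᶜ σ.R :=
  σ.hR.resolve_left (Set.nonempty_iff_ne_empty.1 ⟨x, h⟩)

lemma GState.not_adj (σ : GState G) {x y : V} (hx : x ∈ σ.L) (hy : y ∈ σ.R) : ¬ G.Adj x y :=
  fun h => (σ.notMem_of_R hy).2 ((σ.compL hx).mem_of_adj hx (σ.notMem_of_R hy).1 h)

lemma Arc.disjoint (hG : G.Connected) {σ τ : GState G} (h : Arc σ τ) :
    Disjoint (Xball σ) (Xball τ) :=
  (ball_disjoint_iff hG _ _ _ _).2 (by have := h.2.2.1; omega)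

/-- Along an arc the left side grows by exactly the ball of the tail: `σ.L ∪ X_σ` is connected
and avoids `X_τ`, and any further vertex of `τ.L` would force `τ.L` to meet the right frontier
of `σ`, which lies in `X_τ`. -/
lemma Arc.L_eq (hG : G.Connected) {σ τ : GState G} (h : Arc σ τ) : τ.L = σ.L ∪ Xball σ := by
  have hdis := h.disjoint hG
  obtain ⟨-, -, -, hτR, hσL, hF, -⟩ := h
  have hXτ : Xball τ ⊆ σ.R :=
    (σ.compR hτR).absorb (ball_connected hG _ _) (Set.subset_compl_iff_disjoint_left.2 hdis)
      ⟨τ.c, hτR, mem_ball_self _ _⟩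
  have hXσ : Xball σ ⊆ τ.L :=
    (τ.compL hσL).absorb (ball_connected hG _ _) (Set.subset_compl_iff_disjoint_right.2 hdis)
      ⟨σ.c, hσL, mem_ball_self _ _⟩
  apply Set.Subset.antisymm
  · intro x hx
    by_contra hxn
    obtain ⟨u, hu, v, hv, huA, hvA, huv⟩ := exists_cross (τ.compL hσL).2.2.1 (σ.L ∪ Xball σ)
      hσL hx (.inr (mem_ball_self _ _)) hxn
    have hvR : v ∈ σ.R := by
      rcases σ.mem_cases v with h1 | h1 | h1
      exacts [absurd (.inl h1) hvA, h1, absurd (.inr h1) hvA]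
    have huX : u ∈ Xball σ := huA.resolve_left fun h1 => σ.not_adj h1 hvR huv
    exact (τ.notMem_of_L hv).1 (hF ⟨⟨(σ.notMem_of_R hvR).1, u, huX, huv⟩, hvR⟩)
  · refine Set.union_subset (fun x hx => ?_) hXσ
    -- Connectivity of the whole graph gives an edge out of `σ.L`, and it can only end in `X_σ`.
    obtain ⟨u, v, hu, hv, huv⟩ := exists_cross_univ hG σ.L hx
      (fun hc => (σ.notMem_of_L hc).1 (mem_ball_self σ.c σ.r))
    have hvX : v ∈ Xball σ := by
      rcases σ.mem_cases v with h1 | h1 | h1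
      exacts [absurd h1 hv, absurd huv (σ.not_adj hu h1), h1]
    have hcomp := σ.compL hx
    refine (τ.compL hσL).absorb hcomp.2.2.1 (fun y hy hyX => ?_) ⟨u, ?_, hu⟩ hx
    · exact (σ.notMem_of_L hy).2 (hXτ hyX)
    · exact (τ.compL hσL).mem_of_adj (hXσ hvX) (fun huX => (σ.notMem_of_L hu).2 (hXτ huX))
        huv.symm

variable {t : ℕ} {σ : ℕ → GState G}

lemma path_L (hG : G.Connected) (harc : ∀ i, i + 1 < t → Arc (σ i) (σ (i + 1)))
    (h0 : (σ 0).L = ∅) (i : ℕ) (hi : i < t) (x : V) :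
    x ∈ (σ i).L ↔ ∃ j < i, x ∈ Xball (σ j) := by
  induction i with
  | zero => simp [h0]
  | succ i ih =>
    rw [(harc i hi).L_eq hG, Set.mem_union, ih (by omega)]
    constructor
    · rintro (⟨j, hj, hx⟩ | hx)
      exacts [⟨j, by omega, hx⟩, ⟨i, by omega, hx⟩]
    · rintro ⟨j, hj, hx⟩
      rcases Nat.lt_succ_iff_lt_or_eq.1 hj with h | rfl
      exacts [.inl ⟨j, h, hx⟩, .inr hx]

/-- A source-to-sink path of states is read as a broadcast with value `r` at each centre. -/
lemma broadcast_of_path [Fintype V] (hG : G.Connected) (ht : 1 ≤ t)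
    (harc : ∀ i, i + 1 < t → Arc (σ i) (σ (i + 1)))
    (h0 : (σ 0).L = ∅) (hlast : (σ (t - 1)).R = ∅) :
    ∃ f, Dominating G f ∧ Efficient G f ∧ PathShaped G f ∧
      cost f = ∑ i ∈ Finset.range t, (σ i).r := by
  have hL := path_L hG harc h0
  have hlt : ∀ i j, i < j → j < t → Disjoint (Xball (σ i)) (Xball (σ j)) := fun i j hij hj =>
    Set.disjoint_left.2 fun x hx => ((σ j).notMem_of_L ((hL j hj x).2 ⟨i, hij, hx⟩)).1
  have hne : ∀ i j, i < t → j < t → i ≠ j → Disjoint (Xball (σ i)) (Xball (σ j)) := by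
    intro i j hi hj hij
    rcases Nat.lt_or_gt_of_ne hij with h | h
    exacts [hlt i j h hj, (hlt j i h hi).symm]
  have hinj : ∀ i j, i < t → j < t → (σ i).c = (σ j).c → i = j := by
    intro i j hi hj hij
    by_contra hc
    exact Set.disjoint_left.1 (hne i j hi hj hc) (mem_ball_self _ _)
      (hij ▸ mem_ball_self (σ j).c (σ j).r)
  have hnadj : ∀ i j, i + 1 < j → j < t →
      ∀ x ∈ Xball (σ i), ∀ y ∈ Xball (σ j), ¬ G.Adj x y := by
    intro i j hij hj x hx y hy
    refine (σ (i + 1)).not_adj ((hL _ (by omega) x).2 ⟨i, by omega, hx⟩) ?_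
    rcases (σ (i + 1)).mem_cases y with h | h | h
    · obtain ⟨k, hk, hyk⟩ := (hL _ (by omega) y).1 h
      exact absurd hy (Set.disjoint_left.1 (hlt k j (by omega) hj) hyk)
    · exact h
    · exact absurd hy (Set.disjoint_left.1 (hlt _ j hij hj) h)
  let f : V → ℕ := fun v => ∑ i ∈ Finset.range t, if (σ i).c = v then (σ i).r else 0
  have hf : ∀ i, i < t → f (σ i).c = (σ i).r := by
    intro i hi
    change ∑ j ∈ Finset.range t, _ = _
    rw [Finset.sum_eq_single_of_mem i (Finset.mem_range.2 hi), if_pos rfl]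
    intro j hj hji
    exact if_neg fun h => hji (hinj j i (Finset.mem_range.1 hj) hi h)
  have hact : ∀ v, 0 < f v ↔ ∃ i, i < t ∧ (σ i).c = v := by
    intro v
    constructor
    · intro hv
      obtain ⟨i, hi, h⟩ := Finset.exists_ne_zero_of_sum_ne_zero (Nat.pos_iff_ne_zero.1 hv)
      refine ⟨i, Finset.mem_range.1 hi, ?_⟩
      by_contra hc
      exact h (if_neg hc)
    · rintro ⟨i, hi, rfl⟩
      rw [hf i hi]
      exact (σ i).r_pos
  refine ⟨f, fun u => ?_, fun u v hu hv huv => ?_, ⟨t, fun i => (σ i).c, ht, hinj, hact, ?_⟩, ?_⟩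
  · have : ∃ i, i < t ∧ u ∈ Xball (σ i) := by
      rcases (σ (t - 1)).mem_cases u with h | h | h
      · obtain ⟨k, hk, h⟩ := (hL _ (by omega) u).1 h
        exact ⟨k, by omega, h⟩
      · simp [hlast] at h
      · exact ⟨t - 1, by omega, h⟩
    obtain ⟨i, hi, hu⟩ := this
    refine ⟨(σ i).c, (hact _).2 ⟨i, hi, rfl⟩, ?_⟩
    rw [hf i hi]
    exact hu
  · obtain ⟨i, hi, rfl⟩ := (hact u).1 hu
    obtain ⟨j, hj, rfl⟩ := (hact v).1 hv
    rw [hf i hi, hf j hj]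
    exact hne i j hi hj fun h => huv (by rw [h])
  · intro i j hi hj
    simp only [DomAdj, hf i hi, hf j hj]
    constructor
    · rintro ⟨-, -, hcne, x, hx, y, hy, hxy⟩
      by_contra hc
      have hij : i ≠ j := fun h => hcne (by rw [h])
      rcases Nat.lt_or_gt_of_ne hij with h | h
      · exact hnadj i j (by omega) hj x hx y hy hxy
      · exact hnadj j i (by omega) hi y hy x hx hxy.symm
    · intro h
      have hij : i ≠ j := by omega
      refine ⟨(σ i).r_pos, (σ j).r_pos, fun h' => hij (hinj i j hi hj h'),
        (ball_adj_iff hG (hne i j hi hj hij)).2 ?_⟩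
      rcases h with rfl | rfl
      · exact (harc i hj).2.2.1
      · rw [SimpleGraph.dist_comm, (harc j hi).2.2.1, Nat.add_comm (σ j).r]
  · change ∑ v, ∑ i ∈ Finset.range t, _ = _
    rw [Finset.sum_comm]
    simp

end StatePaths

/-! ### From broadcasts to state paths -/

section Broadcasts

variable {G : SimpleGraph V}

/-- A union of a nonempty interval of consecutive linked connected sets is connected. -/
lemma interval_connected {B : ℕ → Set V} {t : ℕ} (hB : ∀ i < t, (G.induce (B i)).Connected)
    (hadj : ∀ i, i + 1 < t → ∃ x ∈ B i, ∃ y ∈ B (i + 1), G.Adj x y) {m n : ℕ} (hmn : m < n)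
    (hn : n ≤ t) : (G.induce {x | ∃ j, m ≤ j ∧ j < n ∧ x ∈ B j}).Connected := by
  induction n, hmn using Nat.le_induction with
  | base =>
    have : {x | ∃ j, m ≤ j ∧ j < m + 1 ∧ x ∈ B j} = B m := by
      ext x
      constructor
      · rintro ⟨j, h1, h2, h⟩
        rwa [show m = j by omega]
      · exact fun h => ⟨m, le_rfl, by omega, h⟩
    rw [this]
    exact hB m (by omega)
  | succ n hmn ih =>
    have hmn' : m + 1 ≤ n := hmn
    have : {x | ∃ j, m ≤ j ∧ j < n + 1 ∧ x ∈ B j}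
        = {x | ∃ j, m ≤ j ∧ j < n ∧ x ∈ B j} ∪ B n := by
      ext x
      constructor
      · rintro ⟨j, h1, h2, h⟩
        rcases Nat.lt_succ_iff_lt_or_eq.1 h2 with h' | rfl
        exacts [.inl ⟨j, h1, h', h⟩, .inr h]
      · rintro (⟨j, h1, h2, h⟩ | h)
        exacts [⟨j, h1, by omega, h⟩, ⟨n, by omega, by omega, h⟩]
    rw [this]
    obtain ⟨k, rfl⟩ : ∃ k, n = k + 1 := ⟨n - 1, by omega⟩
    obtain ⟨x, hx, y, hy, hxy⟩ := hadj k (by omega)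
    exact SimpleGraph.connected_induce_union (ih (by omega)).preconnected
      (hB (k + 1) (by omega)).preconnected ⟨k, by omega, by omega, hx⟩ hy hxy

/-- Conversely, a broadcast enumerated as `a 0, …, a (t-1)` along its domination path becomes the
state path whose `i`-th state has the earlier balls on its left and the later ones on its right. -/
lemma path_of_broadcast [Fintype V] (hG : G.Connected) {f : V → ℕ} (hdom : Dominating G f)
    (heff : Efficient G f) (hpath : PathShaped G f) :
    ∃ (t : ℕ) (σ : ℕ → GState G), 1 ≤ t ∧ (∀ i, i + 1 < t → Arc (σ i) (σ (i + 1))) ∧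
      (σ 0).L = ∅ ∧ (σ (t - 1)).R = ∅ ∧ cost f = ∑ i ∈ Finset.range t, (σ i).r := by
  obtain ⟨t, a, ht, hinj, hact, hadj⟩ := hpath
  let B : ℕ → Set V := fun i => ball G (a i) (f (a i))
  have hpos : ∀ i < t, 0 < f (a i) := fun i hi => (hact _).2 ⟨i, hi, rfl⟩
  have hdis : ∀ i j, i < t → j < t → i ≠ j → Disjoint (B i) (B j) := fun i j hi hj hij =>
    heff _ _ (hpos i hi) (hpos j hj) fun h => hij (hinj i j hi hj h)
  have huniq : ∀ i j x, i < t → j < t → x ∈ B i → x ∈ B j → i = j := by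
    intro i j x hi hj h1 h2
    by_contra hc
    exact Set.disjoint_left.1 (hdis i j hi hj hc) h1 h2
  have hcov : ∀ x, ∃ i < t, x ∈ B i := by
    intro x
    obtain ⟨v, hv, hx⟩ := hdom x
    obtain ⟨i, hi, rfl⟩ := (hact v).1 hv
    exact ⟨i, hi, hx⟩
  have hedge : ∀ i, i + 1 < t → ∃ x ∈ B i, ∃ y ∈ B (i + 1), G.Adj x y := fun i hi =>
    ((hadj i (i + 1) (by omega) hi).2 (.inl rfl)).2.2.2
  have hnear : ∀ i j x y, i < t → j < t → x ∈ B i → y ∈ B j → G.Adj x y →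
      i = j ∨ i + 1 = j ∨ j + 1 = i := by
    intro i j x y hi hj hx hy hxy
    by_cases hij : i = j
    · exact .inl hij
    · exact .inr ((hadj i j hi hj).1 ⟨hpos i hi, hpos j hj, fun h => hij (hinj i j hi hj h),
        x, hx, y, hy, hxy⟩)
  have hconn : ∀ {m n : ℕ}, m < n → n ≤ t →
      (G.induce {x | ∃ j, m ≤ j ∧ j < n ∧ x ∈ B j}).Connected :=
    interval_connected (fun i _ => ball_connected hG _ _) hedge
  have hstate : ∀ i, i < t → ∃ s : GState G, s.c = a i ∧ s.r = f (a i) ∧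
      s.L = {x | ∃ j, 0 ≤ j ∧ j < i ∧ x ∈ B j} ∧
      s.R = {x | ∃ j, i + 1 ≤ j ∧ j < t ∧ x ∈ B j} := by
    intro i hi
    refine ⟨⟨a i, f (a i), {x | ∃ j, 0 ≤ j ∧ j < i ∧ x ∈ B j},
      {x | ∃ j, i + 1 ≤ j ∧ j < t ∧ x ∈ B j}, hpos i hi, ?_, ?_, ?_, ?_⟩, rfl, rfl, rfl, rfl⟩
    · refine Set.eq_empty_of_forall_notMem ?_
      rintro x ⟨⟨j, -, hj, hxj⟩, ⟨k, hk, hkt, hxk⟩⟩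
      have := huniq j k x (by omega) hkt hxj hxk
      omega
    · ext x
      constructor
      · rintro (⟨j, -, hj, hx⟩ | ⟨j, hj, hjt, hx⟩) hxi
        · have := huniq j i x (by omega) hi hx hxi
          omega
        · have := huniq j i x hjt hi hx hxi
          omega
      · intro hx
        obtain ⟨j, hj, hxj⟩ := hcov x
        have hji : j ≠ i := by
          rintro rfl
          exact hx hxj
        rcases Nat.lt_or_gt_of_ne hji with h | h
        exacts [.inl ⟨j, by omega, h, hxj⟩, .inr ⟨j, h, hj, hxj⟩]
    · rcases Nat.eq_zero_or_pos i with rfl | h0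
      · left
        refine Set.eq_empty_of_forall_notMem ?_
        rintro x ⟨j, -, hj, -⟩
        omega
      · right
        refine isCompOf_of_closed (hconn h0 hi.le) ?_ ?_
        · rintro x ⟨j, -, hj, hx⟩ hxi
          have := huniq j i x (by omega) hi hx hxi
          omega
        · rintro x ⟨j, -, hj, hx⟩ y hy hxy
          obtain ⟨k, hk, hyk⟩ := hcov y
          have hki : k ≠ i := by
            rintro rfl
            exact hy hyk
          have := hnear j k x y (by omega) hk hx hyk hxy
          exact ⟨k, by omega, by omega, hyk⟩
    · rcases Nat.lt_or_ge (i + 1) t with h0 | h0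
      · right
        refine isCompOf_of_closed (hconn h0 le_rfl) ?_ ?_
        · rintro x ⟨j, hj, hjt, hx⟩ hxi
          have := huniq j i x hjt hi hx hxi
          omega
        · rintro x ⟨j, hj, hjt, hx⟩ y hy hxy
          obtain ⟨k, hk, hyk⟩ := hcov y
          have hki : k ≠ i := by
            rintro rfl
            exact hy hyk
          have := hnear j k x y hjt hk hx hyk hxy
          exact ⟨k, by omega, hk, hyk⟩
      · left
        refine Set.eq_empty_of_forall_notMem ?_
        rintro x ⟨j, hj, hjt, -⟩
        omega
  obtain ⟨s₀, -⟩ := hstate 0 ht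
  -- States beyond index `t` are irrelevant and are filled with an arbitrary one.
  have hall : ∀ i, ∃ s : GState G, i < t → s.c = a i ∧ s.r = f (a i) ∧
      s.L = {x | ∃ j, 0 ≤ j ∧ j < i ∧ x ∈ B j} ∧
      s.R = {x | ∃ j, i + 1 ≤ j ∧ j < t ∧ x ∈ B j} := by
    intro i
    by_cases hi : i < t
    · obtain ⟨s, hs⟩ := hstate i hi
      exact ⟨s, fun _ => hs⟩
    · exact ⟨s₀, fun h => absurd h hi⟩
  choose σ hσ using hall
  have hX : ∀ i < t, Xball (σ i) = B i := by
    intro i hi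
    obtain ⟨h1, h2, -⟩ := hσ i hi
    rw [Xball, h1, h2]
  refine ⟨t, σ, ht, fun i hi => ?_, ?_, ?_, ?_⟩
  · obtain ⟨c1, r1, L1, R1⟩ := hσ i (by omega)
    obtain ⟨c2, r2, L2, R2⟩ := hσ (i + 1) hi
    have hR : a (i + 1) ∈ (σ i).R := by
      rw [R1]
      exact ⟨i + 1, le_rfl, hi, mem_ball_self _ _⟩
    have hL : a i ∈ (σ (i + 1)).L := by
      rw [L2]
      exact ⟨i, by omega, by omega, mem_ball_self _ _⟩
    refine ⟨⟨_, hR⟩, ⟨_, hL⟩, ?_, c2 ▸ hR, c1 ▸ hL, ?_, ?_⟩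
    · rw [c1, c2, r1, r2]
      exact (ball_adj_iff hG (hdis i (i + 1) (by omega) hi (by omega))).1 (hedge i hi)
    · rw [hX i (by omega), hX (i + 1) hi, R1]
      rintro y ⟨⟨-, x, hx, hxy⟩, j, hj, hjt, hy⟩
      have := hnear i j x y (by omega) hjt hx hy hxy
      rwa [show i + 1 = j by omega]
    · rw [hX i (by omega), hX (i + 1) hi, L2]
      rintro y ⟨⟨-, x, hx, hxy⟩, j, -, hj, hy⟩
      have := hnear (i + 1) j x y hi (by omega) hx hy hxy
      rwa [show i = j by omega]
  · rw [(hσ 0 ht).2.2.1]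
    refine Set.eq_empty_of_forall_notMem ?_
    rintro x ⟨j, -, hj, -⟩
    omega
  · rw [(hσ (t - 1) (by omega)).2.2.2]
    refine Set.eq_empty_of_forall_notMem ?_
    rintro x ⟨j, hj, hjt, -⟩
    omega
  · have h1 : ∑ i ∈ Finset.range t, (σ i).r = ∑ i ∈ Finset.range t, f (a i) :=
      Finset.sum_congr rfl fun i hi => (hσ i (Finset.mem_range.1 hi)).2.1
    have h2 : ∑ i ∈ Finset.range t, f (a i) = ∑ v ∈ (Finset.range t).image a, f v :=
      (Finset.sum_image fun i hi j hj h =>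
        hinj i j (by simpa using hi) (by simpa using hj) h).symm
    rw [h1, h2]
    refine (Finset.sum_subset (Finset.subset_univ _) fun v _ hv => ?_).symm
    by_contra hc
    obtain ⟨i, hi, rfl⟩ := (hact v).1 (Nat.pos_of_ne_zero hc)
    exact hv (Finset.mem_image_of_mem a (Finset.mem_range.2 hi))

end Broadcasts

end BD

/-- The minimum total weight of a source-to-sink directed path in the state
digraph `D(H)` equals `γ_path(H)`. -/
theorem min_path_weight_eq_gammaPath {V : Type*} [Fintype V] (H : SimpleGraph V)
    (hconn : H.Connected) (hcard : 1 < Fintype.card V) :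
    sInf {w | ∃ (t : ℕ) (σ : ℕ → BD.GState H), 1 ≤ t ∧
        (∀ i, i + 1 < t → BD.Arc (σ i) (σ (i + 1))) ∧
        (σ 0).L = ∅ ∧ (σ (t - 1)).R = ∅ ∧
        w = ∑ i ∈ Finset.range t, (σ i).r} = BD.gammaPath H := by
  unfold BD.gammaPath
  congr 1
  ext w
  constructor
  · rintro ⟨t, σ, ht, harc, h0, hlast, rfl⟩
    exact BD.broadcast_of_path hconn ht harc h0 hlast
  · rintro ⟨f, hdom, heff, hpath, rfl⟩
    exact BD.path_of_broadcast hconn hdom heff hpath
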